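/- Let α be the unique real number in [2, ∞) with α·ln(2e/α) = 1, and let c be a real number with c ≥ ln 2 / ln(2/α)⁻¹, i.e. c ≥ −ln 2/ln(α/2) (equivalently c·ln(2/α) ≤ −ln 2 is not required; assume c ≥ 0 and c − ln 2/ln(2/α) ≥ 0). Then Σ_{x=1}^{∞} min(1, 2·(2/α)^{x−c}) ≤ c − ln 2/ln(2/α) + 2/(α−2). -/

import Mathlib

/-!
Write `r = 2 / α`, which lies in `(0, 1)`, and `T = c - log 2 / log r`. Since `2 = r ^ (log 2 / log r)`,
the summand at the positive integer `k` is `min 1 (r ^ (k - T))`. With `n = ⌊T⌋₊` and `u = T - n`, the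
first `n` terms are at most `1` each and the others are dominated by a geometric series of total
`r ^ (-u) * G`, where `G = r / (1 - r) = 2 / (α - 2)`. Bernoulli's inequality (convexity of
`u ↦ r ^ (-u)`, with equality at `u = 0` and `u = 1`) gives `r ^ (-u) * G ≤ u + G`.
The equation defining `α` serves only to exclude `α = 2`.
-/

/-- The chord bound for `u ↦ r ^ (-u)` on `[0, 1]`, scaled by `r / (1 - r)`; the factor `r` is
absorbed in the exponent. -/
lemma rpow_one_sub_div_le {r u : ℝ} (hr0 : 0 < r) (hr1 : r < 1) (hu0 : 0 ≤ u) (hu1 : u ≤ 1) :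
    r ^ (1 - u) * (1 - r)⁻¹ ≤ u + r / (1 - r) := by
  have h1 : 0 < 1 - r := by linarith
  have hb : (r⁻¹) ^ u ≤ 1 + u * (r⁻¹ - 1) := by
    have := rpow_one_add_le_one_add_mul_self (s := r⁻¹ - 1)
      (by have := inv_pos.2 hr0; linarith) hu0 hu1
    simpa using this
  have he : r ^ (1 - u) = r * (r⁻¹) ^ u := by
    rw [Real.rpow_sub hr0, Real.rpow_one, Real.inv_rpow hr0.le, div_eq_mul_inv]
  calc r ^ (1 - u) * (1 - r)⁻¹ ≤ (r * (1 + u * (r⁻¹ - 1))) * (1 - r)⁻¹ := by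
        rw [he]; gcongr
    _ = u + r / (1 - r) := by field_simp; ring

lemma tsum_min_one_rpow_le {r T : ℝ} (hr0 : 0 < r) (hr1 : r < 1) (hT : 0 ≤ T) :
    ∑' x : ℕ, min 1 (r ^ (((x : ℝ) + 1) - T)) ≤ T + r / (1 - r) := by
  have key : ∀ (s : ℝ) (x : ℕ), r ^ (((x : ℝ) + 1) - s) = r ^ (1 - s) * r ^ x := by
    intro s x
    rw [← Real.rpow_natCast, ← Real.rpow_add hr0]
    congr 1; ring
  have hgeo : ∀ s : ℝ, Summable fun x : ℕ => r ^ (1 - s) * r ^ x := fun s =>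
    (summable_geometric_of_lt_one hr0.le hr1).mul_left _
  have hsum : Summable fun x : ℕ => min 1 (r ^ (((x : ℝ) + 1) - T)) :=
    Summable.of_nonneg_of_le (fun x => le_min zero_le_one (Real.rpow_nonneg hr0.le _))
      (fun x => (min_le_right _ _).trans (key T x).le) (hgeo T)
  set n := ⌊T⌋₊ with hn
  have hu0 : 0 ≤ T - n := sub_nonneg.2 (Nat.floor_le hT)
  have hu1 : T - n ≤ 1 := by have := Nat.lt_floor_add_one T; rw [← hn] at this; linarith
  rw [← hsum.sum_add_tsum_nat_add n]
  have hhead : ∑ i ∈ Finset.range n, min 1 (r ^ (((i : ℝ) + 1) - T)) ≤ n := by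
    calc _ ≤ ∑ i ∈ Finset.range n, (1 : ℝ) := Finset.sum_le_sum fun i _ => min_le_left _ _
      _ = n := by simp
  have htail : ∑' i : ℕ, min 1 (r ^ ((((i + n : ℕ) : ℝ) + 1) - T))
      ≤ r ^ (1 - (T - n)) * (1 - r)⁻¹ := by
    rw [← tsum_geometric_of_lt_one hr0.le hr1, ← tsum_mul_left]
    refine Summable.tsum_le_tsum (fun i => (min_le_right _ _).trans (le_of_eq ?_))
      ((summable_nat_add_iff n).2 hsum) (hgeo _)
    rw [← key]
    congr 1; push_cast; ring
  have := rpow_one_sub_div_le hr0 hr1 hu0 hu1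
  linarith

theorem stmt_9 (α : ℝ) (hα2 : 2 ≤ α) (hα : α * Real.log (2 * Real.exp 1 / α) = 1)
    (c : ℝ) (hc0 : 0 ≤ c) (hc : 0 ≤ c - Real.log 2 / Real.log (2 / α)) :
    ∑' x : ℕ, min 1 (2 * (2 / α) ^ (((x : ℝ) + 1) - c))
      ≤ c - Real.log 2 / Real.log (2 / α) + 2 / (α - 2) := by
  have hα' : 2 < α := by
    refine lt_of_le_of_ne hα2 ?_
    rintro rfl
    rw [mul_div_cancel_left₀ _ two_ne_zero, Real.log_exp] at hα
    norm_num at hα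
  have hr0 : 0 < 2 / α := by positivity
  have hr1 : 2 / α < 1 := (div_lt_one (by linarith)).2 hα'
  have hlog : Real.log (2 / α) ≠ 0 := (Real.log_neg hr0 hr1).ne
  have htwo : (2 / α) ^ (Real.log 2 / Real.log (2 / α)) = 2 := by
    rw [Real.rpow_def_of_pos hr0, mul_div_cancel₀ _ hlog, Real.exp_log two_pos]
  have hG : 2 / α / (1 - 2 / α) = 2 / (α - 2) := by
    have : α - 2 ≠ 0 := by linarith
    have : α ≠ 0 := by linarith
    field_simp
  have hterm : ∀ x : ℕ, 2 * (2 / α) ^ (((x : ℝ) + 1) - c)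
      = (2 / α) ^ (((x : ℝ) + 1) - (c - Real.log 2 / Real.log (2 / α))) := by
    intro x
    nth_rewrite 1 [← htwo]
    rw [← Real.rpow_add hr0]
    congr 1; ring
  simp_rw [hterm]
  rw [← hG]
  exact tsum_min_one_rpow_le hr0 hr1 hc
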